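/- Let α > 0 be a non-integer real number and let k_l, k_s, d_l, d_s, γ, T_i, T_∞, h₀ be positive constants with ω = √(d_l/d_s). For ν > 0 define s(t) = 2ν√(d_l t) and the functions Ψ_l, Ψ_s as follows: F_l = −2 h₀ T_∞ √(d_l) M(−α/2,1/2,−ν²) / [ k_l M(−α/2,1/2,−ν²) + 2√(d_l) h₀ ν M(−α/2+1/2,3/2,−ν²) ]; E_l = −ν M(−α/2+1/2,3/2,−ν²) F_l / M(−α/2,1/2,−ν²); F_s = −T_i 2^{α+1} d_s^{α/2} M(α/2+1/2,1/2,ν²ω²) / U(α/2+1/2,1/2,ν²ω²); E_s = −νω M(−α/2+1/2,3/2,−ν²ω²) F_s / M(−α/2,1/2,−ν²ω²); Ψ_l(x,t) = t^{α/2}[ E_l M(−α/2,1/2,−η_l²) + F_l η_l M(−α/2+1/2,3/2,−η_l²) ], η_l = x/(2√(d_l t)); Ψ_s(x,t) = t^{α/2}[ E_s M(−α/2,1/2,−η_s²) + F_s η_s M(−α/2+1/2,3/2,−η_s²) ], η_s = x/(2√(d_s t)). Then the Stefan condition k_s ∂Ψ_s/∂x(s(t),t) − k_l ∂Ψ_l/∂x(s(t),t)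 = γ s(t)^α s'(t) holds for all t > 0 if and only if ν satisfies equation (24): −(k_s T_i d_s^{(α−1)/2} / (γ d_l^{(α+1)/2})) f₁(ν) + (h₀ T_∞ / (γ 2^α d_l^{(α+1)/2})) f₂(ν) = ν^{α+1}. -/

import Mathlib

noncomputable def poch (a : ℝ) (s : ℕ) : ℝ := ∏ i ∈ Finset.range s, (a + i)

/-- Kummer's confluent hypergeometric function `M(a,b,z)`,
defined by the everywhere-convergent series `M(a,b,z) = Σ_{s} (a)_s z^s / ((b)_s s!)`. -/
noncomputable def kummerM (a b z : ℝ) : ℝ :=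
  ∑' s : ℕ, poch a s / (poch b s * (Nat.factorial s)) * z ^ s

/-- Tricomi's confluent hypergeometric function
`U(a,b,z) = (1/Γ(a)) ∫_0^∞ e^{−z t} t^{a−1} (1+t)^{b−a−1} dt`. -/
noncomputable def tricomiU (a b z : ℝ) : ℝ :=
  (1 / Real.Gamma a) *
    ∫ t in Set.Ioi (0:ℝ), Real.exp (-z * t) * t ^ (a - 1) * (1 + t) ^ (b - a - 1)

open Filter Topology

lemma poch_succ (a : ℝ) (s : ℕ) : poch a (s+1) = poch a s * (a + s) := by
  simp [poch, Finset.prod_range_succ]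

lemma poch_succ' (a : ℝ) (s : ℕ) : poch a (s+1) = a * poch (a+1) s := by
  simp only [poch, Finset.prod_range_succ', Nat.cast_zero, add_zero]
  rw [mul_comm]
  congr 1
  apply Finset.prod_congr rfl
  intro i _
  push_cast; ring

lemma poch_pos {a : ℝ} (ha : 0 < a) (s : ℕ) : 0 < poch a s := by
  apply Finset.prod_pos
  intro i _
  positivity

noncomputable def kc (a b : ℝ) (s : ℕ) : ℝ := poch a s / (poch b s * (Nat.factorial s))

lemma kc_succ (a : ℝ) {b : ℝ} (hb : 0 < b) (s : ℕ) :
    kc a b (s+1) = kc a b s * ((a + s) / ((b + s) * (s + 1))) := by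
  have := (poch_pos hb s).ne'
  have h2 : b + s ≠ 0 := by positivity
  have h3 : (Nat.factorial s : ℝ) ≠ 0 := by positivity
  have h4 : (s : ℝ) + 1 ≠ 0 := by positivity
  simp only [kc, poch_succ, Nat.factorial_succ]
  push_cast
  field_simp

lemma kc_succ' (a : ℝ) {b : ℝ} (hb : 0 < b) (s : ℕ) :
    kc a b (s+1) * (s + 1) = a / b * kc (a+1) (b+1) s := by
  have := (poch_pos (show 0 < b + 1 by linarith) s).ne'
  have h3 : (Nat.factorial s : ℝ) ≠ 0 := by positivity
  have h4 : (s : ℝ) + 1 ≠ 0 := by positivity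
  simp only [kc, poch_succ', Nat.factorial_succ]
  push_cast
  field_simp

lemma tendsto_ratio (a b R : ℝ) :
    Tendsto (fun s : ℕ => (a + s) / ((b + s) * (s + 1)) * R) atTop (𝓝 0) := by
  have h1 : Tendsto (fun s : ℕ => (s : ℝ)) atTop atTop := tendsto_natCast_atTop_atTop
  have h2 : Tendsto (fun s : ℕ => (b + s : ℝ)) atTop atTop := tendsto_atTop_add_const_left _ _ h1
  have h3 : Tendsto (fun s : ℕ => ((s : ℝ) + 1)) atTop atTop := tendsto_atTop_add_const_right _ _ h1
  have h4 : Tendsto (fun s : ℕ => (1 + (a - b) / (b + s)) * (((s : ℝ) + 1)⁻¹) * R) atTop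
      (𝓝 ((1 + 0) * 0 * R)) :=
    ((tendsto_const_nhds.add (h2.const_div_atTop _)).mul h3.inv_tendsto_atTop).mul_const _
  rw [show ((1 + 0) * 0 * R : ℝ) = 0 by ring] at h4
  refine h4.congr' ?_
  filter_upwards [h2.eventually_gt_atTop 0, h3.eventually_gt_atTop 0] with s hs hs'
  field_simp
  ring

lemma kc_summable (a : ℝ) {b : ℝ} (hb : 0 < b) (R : ℝ) :
    Summable (fun s => kc a b s * R ^ s) := by
  apply summable_of_ratio_norm_eventually_le (r := 1/2) (by norm_num)
  have h := (tendsto_ratio a b R).norm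
  rw [norm_zero] at h
  filter_upwards [h.eventually_le_const (show (0:ℝ) < 1/2 by norm_num)] with s hs
  rw [kc_succ a hb, pow_succ]
  calc _ = ‖(a + s) / ((b + s) * (s + 1)) * R‖ * ‖kc a b s * R ^ s‖ := by
        rw [← norm_mul]; congr 1; ring
    _ ≤ _ := by gcongr

lemma kummerM_eq (a b z : ℝ) : kummerM a b z = ∑' s, kc a b s * z ^ s := rfl

lemma kummerM_zero (a b : ℝ) : kummerM a b 0 = 1 := by
  rw [kummerM_eq, tsum_eq_single 0]
  · simp [kc, poch]
  · intro n hn; simp [hn]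

lemma kummerM_pos {a b z : ℝ} (ha : 0 < a) (hb : 0 < b) (hz : 0 ≤ z) : 0 < kummerM a b z := by
  rw [kummerM_eq]
  have h := kc_summable a hb z
  refine h.tsum_pos (fun s => ?_) 0 ?_
  · have := poch_pos ha s
    have := poch_pos hb s
    unfold kc; positivity
  · simp [kc, poch]

lemma kummerM_hasDerivAt (a : ℝ) {b : ℝ} (hb : 0 < b) (z : ℝ) :
    HasDerivAt (kummerM a b) (a / b * kummerM (a+1) (b+1) z) z := by
  have hb1 : 0 < b + 1 := by linarith
  set R := |z| + 1 with hR
  have hR0 : 0 < R := by positivity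
  set u : ℕ → ℝ := fun s => ‖kc a b s * (s * R ^ (s-1))‖ with hu
  have hus : Summable u := by
    apply (summable_nat_add_iff 1).1
    have := ((kc_summable (a+1) hb1 R).mul_left (a / b)).norm
    refine this.congr (fun s => ?_)
    show _ = ‖kc a b (s+1) * ((s+1 : ℕ) * R ^ (s+1-1))‖
    congr 1
    rw [← mul_assoc, ← kc_succ' a hb, Nat.add_sub_cancel]
    push_cast
    ring
  have key := hasDerivAt_tsum_of_isPreconnected (g := fun s (y:ℝ) => kc a b s * y ^ s)
    (g' := fun s (y:ℝ) => kc a b s * (s * y ^ (s-1))) (t := Metric.ball 0 R) (y₀ := 0) (y := z)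
    hus Metric.isOpen_ball (convex_ball _ _).isPreconnected
    (fun s y _ => (hasDerivAt_pow s y).const_mul _)
    (fun s y hy => by
      rw [mem_ball_zero_iff] at hy
      simp only [hu, norm_mul, norm_pow]
      gcongr
      exact hy.le.trans (le_abs_self _))
    (by simpa using hR0) (kc_summable a hb 0)
    (by rw [mem_ball_zero_iff, Real.norm_eq_abs]; linarith)
  refine key.congr_deriv (Eq.symm ?_)
  have hs : Summable (fun s : ℕ => kc a b s * (s * z ^ (s-1))) := by
    apply Summable.of_norm_bounded hus
    intro s
    simp only [hu, norm_mul, norm_pow]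
    gcongr
    rw [Real.norm_eq_abs, Real.norm_eq_abs, abs_of_pos hR0]; linarith
  rw [hs.tsum_eq_zero_add, kummerM_eq, ← tsum_mul_left]
  simp only [Nat.cast_zero, zero_mul, mul_zero, zero_add]
  apply tsum_congr
  intro s
  rw [← mul_assoc, ← kc_succ' a hb, Nat.add_sub_cancel]
  push_cast
  ring

lemma kummerM_contig (a : ℝ) {b : ℝ} (hb : 0 < b) (z : ℝ) :
    z * ((a+1) / (b * (b+1))) * kummerM (a+1+1) (b+1+1) z + kummerM (a+1) (b+1) z
      - z / b * kummerM (a+1) (b+1) z = kummerM a b z := by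
  have hb1 : 0 < b + 1 := by linarith
  have hb2 : 0 < b + 1 + 1 := by linarith
  have S0 := kc_summable a hb z
  have S1 := kc_summable (a+1) hb1 z
  have S2 := kc_summable (a+1+1) hb2 z
  have T0 := (summable_nat_add_iff 1).2 S0
  have T1 := (summable_nat_add_iff 1).2 S1
  have e1 : kummerM (a+1) (b+1) z = 1 + ∑' s, kc (a+1) (b+1) (s+1) * z^(s+1) := by
    rw [kummerM_eq, S1.tsum_eq_zero_add]; simp [kc, poch]
  have e0 : kummerM a b z = 1 + ∑' s, kc a b (s+1) * z^(s+1) := by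
    rw [kummerM_eq, S0.tsum_eq_zero_add]; simp [kc, poch]
  have main : z * ((a+1) / (b * (b+1))) * (∑' s, kc (a+1+1) (b+1+1) s * z^s)
      + (∑' s, kc (a+1) (b+1) (s+1) * z^(s+1)) - z / b * (∑' s, kc (a+1) (b+1) s * z^s)
      = ∑' s, kc a b (s+1) * z^(s+1) := by
    rw [← tsum_mul_left, ← tsum_mul_left, ← (S2.mul_left _).tsum_add T1,
      ← ((S2.mul_left _).add T1).tsum_sub (S1.mul_left _)]
    apply tsum_congr
    intro s
    have h2 : b + 1 + s ≠ 0 := by positivity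
    have h4 : (s : ℝ) + 1 ≠ 0 := by positivity
    have k0 : kc a b (s+1) = a / b * kc (a+1) (b+1) s / (s+1) := by
      rw [← kc_succ' a hb]; field_simp
    have k1 := kc_succ (a+1) hb1 s
    have k2 := kc_succ' (a+1) hb1 s
    have k3 : (a+1) / (b * (b+1)) * kc (a+1+1) (b+1+1) s
        = kc (a+1) (b+1) s * ((a + 1 + s) / ((b + 1 + s))) / b := by
      rw [show (a+1) / (b * (b+1)) * kc (a+1+1) (b+1+1) s
        = ((a+1) / (b+1) * kc (a+1+1) (b+1+1) s) / b by field_simp, ← k2, k1]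
      field_simp
    have : z * ((a+1) / (b * (b+1))) * (kc (a+1+1) (b+1+1) s * z^s)
       = ((a+1) / (b * (b+1)) * kc (a+1+1) (b+1+1) s) * z^(s+1) := by ring
    rw [this, k3, k1, k0]
    field_simp
    ring
  rw [← kummerM_eq, ← kummerM_eq] at main
  rw [e0, ← main]
  linear_combination e1

/-- Solutions, with derivative, of the similarity equation. -/
def IsSol (α : ℝ) (y y1 : ℝ → ℝ) : Prop :=
  ∀ z, HasDerivAt y (y1 z) z ∧ HasDerivAt y1 (-2 * z * y1 z + 2 * α * y z) z

lemma const_of_deriv {g : ℝ → ℝ} (h : ∀ z, HasDerivAt g 0 z) (z : ℝ) : g z = g 0 :=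
  is_const_of_deriv_eq_zero (fun z => (h z).differentiableAt) (fun z => (h z).deriv) z 0

lemma hasDerivAt_exp_sq (z : ℝ) :
    HasDerivAt (fun z => Real.exp (-z^2)) (-2 * z * Real.exp (-z^2)) z := by
  have := ((hasDerivAt_pow 2 z).neg).exp
  refine this.congr_deriv ?_
  simp; try ring

lemma IsSol.wronskian {α : ℝ} {y y1 w w1 : ℝ → ℝ} (hy : IsSol α y y1) (hw : IsSol α w w1) (z : ℝ) :
    y z * w1 z - y1 z * w z = Real.exp (-z^2) * (y 0 * w1 0 - y1 0 * w 0) := by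
  have h : ∀ z, HasDerivAt (fun z => (y z * w1 z - y1 z * w z) / Real.exp (-z^2)) 0 z := by
    intro z
    have := (((hy z).1.mul (hw z).2).sub ((hy z).2.mul (hw z).1)).div (hasDerivAt_exp_sq z)
      (Real.exp_pos _).ne'
    refine this.congr_deriv ?_
    simp only [Pi.mul_apply, Pi.sub_apply]
    field_simp
    ring
  have := const_of_deriv h z
  rw [div_eq_iff (Real.exp_pos _).ne'] at this
  rw [this]
  simp
  ring

lemma IsSol.sub {α : ℝ} {y y1 w w1 : ℝ → ℝ} (hy : IsSol α y y1) (hw : IsSol α w w1) :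
    IsSol α (fun z => y z - w z) (fun z => y1 z - w1 z) := by
  intro z
  refine ⟨(hy z).1.sub (hw z).1, ?_⟩
  refine ((hy z).2.sub (hw z).2).congr_deriv ?_
  ring

lemma IsSol.eq {α : ℝ} {p p1 y y1 w w1 : ℝ → ℝ} (hp : IsSol α p p1) (hpp : ∀ z, 0 < p z)
    (hy : IsSol α y y1) (hw : IsSol α w w1) (h0 : y 0 = w 0) (h1 : y1 0 = w1 0) (z : ℝ) :
    y z = w z := by
  have hq := hy.sub hw
  have h : ∀ z, HasDerivAt (fun z => (y z - w z) / p z) 0 z := by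
    intro z
    have W := hp.wronskian hq z
    simp only [h0, h1, sub_self, mul_zero] at W
    have := (hq z).1.div (hp z).1 (hpp z).ne'
    refine this.congr_deriv ?_
    rw [div_eq_zero_iff]
    left
    linarith
  have := const_of_deriv h z
  simp only [h0, sub_self, zero_div, div_eq_zero_iff, (hpp z).ne', or_false] at this
  linarith

lemma kummer_comp (a : ℝ) {b : ℝ} (hb : 0 < b) (c z : ℝ) :
    HasDerivAt (fun z => kummerM a b (c * z^2)) (a / b * kummerM (a+1) (b+1) (c*z^2) * (2*c*z)) z := by
  have h := ((hasDerivAt_pow 2 z).const_mul c)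
  have := (kummerM_hasDerivAt a hb (c * z^2)).comp z h
  refine this.congr_deriv ?_
  simp only [Nat.cast_ofNat, Nat.add_one_sub_one, pow_one, Nat.reduceSub]
  ring

lemma solA (α : ℝ) : IsSol α (fun z => kummerM (-α/2) (1/2) (-1 * z^2))
    (fun z => (-α/2) / (1/2) * kummerM (-α/2+1) (1/2+1) (-1*z^2) * (2*(-1)*z)) := by
  intro z
  have hb : (0:ℝ) < 1/2 := by norm_num
  refine ⟨kummer_comp _ hb _ z, ?_⟩
  have := ((kummer_comp (-α/2+1) (show (0:ℝ) < 1/2+1 by norm_num) (-1) z).const_mul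
    ((-α/2) / (1/2))).mul ((hasDerivAt_id z).const_mul (2*(-1)))
  refine this.congr_deriv ?_
  have c := kummerM_contig (-α/2) hb (-1 * z^2)
  simp only [id, Pi.mul_apply, Pi.add_apply]
  rw [← c]
  ring

lemma solA' (α : ℝ) : IsSol α (fun z => Real.exp (-z^2) * kummerM (α/2+1/2) (1/2) (1 * z^2))
    (fun z => -2 * z * Real.exp (-z^2) * kummerM (α/2+1/2) (1/2) (1 * z^2) + Real.exp (-z^2) *
      ((α/2+1/2) / (1/2) * kummerM (α/2+1/2+1) (1/2+1) (1*z^2) * (2*1*z))) := by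
  intro z
  have hb : (0:ℝ) < 1/2 := by norm_num
  have k0 := kummer_comp (α/2+1/2) hb 1 z
  have k1 := ((kummer_comp (α/2+1/2+1) (show (0:ℝ) < 1/2+1 by norm_num) 1 z).const_mul
    ((α/2+1/2) / (1/2))).mul ((hasDerivAt_id z).const_mul (2*1))
  have e := hasDerivAt_exp_sq z
  refine ⟨e.mul k0, ?_⟩
  have := ((((hasDerivAt_id z).const_mul (-2)).mul e).mul k0).add (e.mul k1)
  refine this.congr_deriv ?_
  have c := kummerM_contig (α/2+1/2) hb (1 * z^2)
  simp only [id, Pi.mul_apply, Pi.add_apply]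
  rw [← c]
  ring

lemma solB (α : ℝ) : IsSol α (fun z => z * kummerM (-α/2+1/2) (3/2) (-1 * z^2))
    (fun z => 1 * kummerM (-α/2+1/2) (3/2) (-1 * z^2) +
      z * ((-α/2+1/2) / (3/2) * kummerM (-α/2+1/2+1) (3/2+1) (-1*z^2) * (2*(-1)*z))) := by
  intro z
  have hb : (0:ℝ) < 3/2 := by norm_num
  have k0 := kummer_comp (-α/2+1/2) hb (-1) z
  have k1 := ((kummer_comp (-α/2+1/2+1) (show (0:ℝ) < 3/2+1 by norm_num) (-1) z).const_mul
    ((-α/2+1/2) / (3/2))).mul ((hasDerivAt_id z).const_mul (2*(-1)))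
  refine ⟨(hasDerivAt_id z).mul k0, ?_⟩
  have := (k0.const_mul 1).add ((hasDerivAt_id z).mul k1)
  refine this.congr_deriv ?_
  have c := kummerM_contig (-α/2+1/2) hb (-1 * z^2)
  simp only [id, Pi.mul_apply, Pi.add_apply]
  rw [← c]
  ring

lemma solB' (α : ℝ) : IsSol α
    (fun z => Real.exp (-z^2) * (z * kummerM (α/2+1) (3/2) (1 * z^2)))
    (fun z => -2 * z * Real.exp (-z^2) * (z * kummerM (α/2+1) (3/2) (1 * z^2)) +
      Real.exp (-z^2) * (1 * kummerM (α/2+1) (3/2) (1 * z^2) +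
      z * ((α/2+1) / (3/2) * kummerM (α/2+1+1) (3/2+1) (1*z^2) * (2*1*z)))) := by
  intro z
  have hb : (0:ℝ) < 3/2 := by norm_num
  have k0 := kummer_comp (α/2+1) hb 1 z
  have k1 := ((kummer_comp (α/2+1+1) (show (0:ℝ) < 3/2+1 by norm_num) 1 z).const_mul
    ((α/2+1) / (3/2))).mul ((hasDerivAt_id z).const_mul (2*1))
  have e := hasDerivAt_exp_sq z
  have m := (hasDerivAt_id z).mul k0
  refine ⟨e.mul m, ?_⟩
  have := ((((hasDerivAt_id z).const_mul (-2)).mul e).mul m).add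
    (e.mul ((k0.const_mul 1).add ((hasDerivAt_id z).mul k1)))
  refine this.congr_deriv ?_
  have c := kummerM_contig (α/2+1) hb (1 * z^2)
  simp only [id, Pi.mul_apply, Pi.add_apply]
  rw [← c]
  ring

lemma posA' {α : ℝ} (hα : 0 < α) (z : ℝ) :
    0 < Real.exp (-z^2) * kummerM (α/2+1/2) (1/2) (1 * z^2) :=
  mul_pos (Real.exp_pos _) (kummerM_pos (by positivity) (by norm_num) (by positivity))

lemma kummerA {α : ℝ} (hα : 0 < α) (z : ℝ) : kummerM (-α/2) (1/2) (-z^2) =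
    Real.exp (-z^2) * kummerM (α/2+1/2) (1/2) (z^2) := by
  have := (solA' α).eq (posA' hα) (solA α) (solA' α) (by simp [kummerM_zero]) (by simp) z
  simpa using this

lemma kummerB {α : ℝ} (hα : 0 < α) (z : ℝ) : z * kummerM (-α/2+1/2) (3/2) (-z^2) =
    Real.exp (-z^2) * (z * kummerM (α/2+1) (3/2) (z^2)) := by
  have := (solA' α).eq (posA' hα) (solB α) (solB' α) (by simp) (by simp [kummerM_zero]) z
  simpa using this

/-- Flux of the similarity solution at the free boundary. -/
lemma flux {α : ℝ} (hα : 0 < α) (T c z E F : ℝ) (hc : 0 < c)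
    (hE : E = -z * kummerM (-α/2+1/2) (3/2) (-z^2) * F / kummerM (-α/2) (1/2) (-z^2)) :
    deriv (fun x => T * (E * kummerM (-α/2) (1/2) (-(x/c)^2)
      + F * (x/c) * kummerM (-α/2+1/2) (3/2) (-(x/c)^2))) (z * c)
    = T / c * (F / kummerM (α/2+1/2) (1/2) (z^2)) := by
  have hz : z * c / c = z := by field_simp
  obtain ⟨A1, B1, dA, dB, W⟩ : ∃ A1 B1 : ℝ,
      HasDerivAt (fun z => kummerM (-α/2) (1/2) (-1 * z^2)) A1 z ∧
      HasDerivAt (fun z => z * kummerM (-α/2+1/2) (3/2) (-1 * z^2)) B1 z ∧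
      kummerM (-α/2) (1/2) (-1 * z^2) * B1 - A1 * (z * kummerM (-α/2+1/2) (3/2) (-1 * z^2))
        = Real.exp (-z^2) := by
    refine ⟨_, _, (solA α z).1, (solB α z).1, ?_⟩
    have W := (solA α).wronskian (solB α) z
    simpa [kummerM_zero] using W
  have D := (((dA.const_mul E).add (dB.const_mul F)).const_mul T)
  have hdiv : HasDerivAt (fun x : ℝ => x / c) (1 / c) (z * c) := (hasDerivAt_id _).div_const c
  have D2 := HasDerivAt.comp_of_eq (z * c) D hdiv hz.symm
  have D3 := D2.deriv
  have hfun : (fun x => T * (E * kummerM (-α/2) (1/2) (-(x/c)^2)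
      + F * (x/c) * kummerM (-α/2+1/2) (3/2) (-(x/c)^2))) = ((fun y => T * (((fun y => E * kummerM (-α/2) (1/2) (-1 * y^2)) + fun y => F * (y * kummerM (-α/2+1/2) (3/2) (-1 * y^2))) y)) ∘ fun x => x / c) := by
    funext x
    simp only [Function.comp, Pi.add_apply, neg_one_mul]
    ring
  rw [hfun, D3]
  have hA := kummerA hα z
  have hM : 0 < kummerM (α/2+1/2) (1/2) (z^2) :=
    kummerM_pos (by positivity) (by norm_num) (by positivity)
  have he := Real.exp_pos (-z^2)
  simp only [neg_one_mul] at W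
  rw [hE]
  rw [hA] at W ⊢
  generalize kummerM (α/2+1/2) (1/2) (z^2) = m at *
  generalize kummerM (-α/2+1/2) (3/2) (-z^2) = n at *
  generalize Real.exp (-z^2) = e at *
  field_simp
  linear_combination T * F * W

/-- with the displayed similarity-type temperatures `Ψ_l, Ψ_s` and free
boundary `s(t) = 2ν√(d_l t)`, the Stefan condition
`k_s ∂Ψ_s/∂x(s(t),t) − k_l ∂Ψ_l/∂x(s(t),t) = γ s(t)^α s'(t)` holds for all `t > 0`
iff `ν` satisfies equation (24). -/
theorem statement_19 (α kl ks dl ds γ Ti Tinf h₀ : ℝ)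
    (hα : 0 < α) (hαnotint : ∀ n : ℤ, α ≠ n)
    (hkl : 0 < kl) (hks : 0 < ks) (hdl : 0 < dl) (hds : 0 < ds)
    (hγ : 0 < γ) (hTi : 0 < Ti) (hTinf : 0 < Tinf) (hh₀ : 0 < h₀)
    (ω : ℝ) (hω : ω = Real.sqrt (dl / ds))
    (ν : ℝ) (hνpos : 0 < ν)
    (s : ℝ → ℝ) (hs : ∀ t : ℝ, s t = 2 * ν * Real.sqrt (dl * t))
    (Fl El Fs Es : ℝ)
    (hFl : Fl = -(2 * h₀ * Tinf * Real.sqrt dl * kummerM (-α / 2) (1 / 2) (-ν ^ 2)) /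
      (kl * kummerM (-α / 2) (1 / 2) (-ν ^ 2)
        + 2 * Real.sqrt dl * h₀ * ν * kummerM (-α / 2 + 1 / 2) (3 / 2) (-ν ^ 2)))
    (hEl : El = -ν * kummerM (-α / 2 + 1 / 2) (3 / 2) (-ν ^ 2) * Fl /
      kummerM (-α / 2) (1 / 2) (-ν ^ 2))
    (hFs : Fs = -Ti * (2:ℝ) ^ (α + 1) * ds ^ (α / 2) *
      kummerM (α / 2 + 1 / 2) (1 / 2) (ν ^ 2 * ω ^ 2) /
        tricomiU (α / 2 + 1 / 2) (1 / 2) (ν ^ 2 * ω ^ 2))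
    (hEs : Es = -ν * ω * kummerM (-α / 2 + 1 / 2) (3 / 2) (-(ν ^ 2 * ω ^ 2)) * Fs /
      kummerM (-α / 2) (1 / 2) (-(ν ^ 2 * ω ^ 2)))
    (Ψl Ψs : ℝ → ℝ → ℝ)
    (hΨl : ∀ x t : ℝ, Ψl x t =
      t ^ (α / 2) *
        (El * kummerM (-α / 2) (1 / 2) (-(x / (2 * Real.sqrt (dl * t))) ^ 2)
          + Fl * (x / (2 * Real.sqrt (dl * t))) *
              kummerM (-α / 2 + 1 / 2) (3 / 2) (-(x / (2 * Real.sqrt (dl * t))) ^ 2)))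
    (hΨs : ∀ x t : ℝ, Ψs x t =
      t ^ (α / 2) *
        (Es * kummerM (-α / 2) (1 / 2) (-(x / (2 * Real.sqrt (ds * t))) ^ 2)
          + Fs * (x / (2 * Real.sqrt (ds * t))) *
              kummerM (-α / 2 + 1 / 2) (3 / 2) (-(x / (2 * Real.sqrt (ds * t))) ^ 2))) :
    (∀ t : ℝ, 0 < t →
        ks * deriv (fun y => Ψs y t) (s t) - kl * deriv (fun y => Ψl y t) (s t)
          = γ * (s t) ^ α * deriv s t) ↔
      -(ks * Ti * ds ^ ((α - 1) / 2) / (γ * dl ^ ((α + 1) / 2))) *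
          (1 / tricomiU (α / 2 + 1 / 2) (1 / 2) (ν ^ 2 * ω ^ 2))
        + h₀ * Tinf / (γ * (2:ℝ) ^ α * dl ^ ((α + 1) / 2)) *
          (1 / (kummerM (α / 2 + 1 / 2) (1 / 2) (ν ^ 2)
                + 2 * Real.sqrt dl * h₀ / kl * ν * kummerM (α / 2 + 1) (3 / 2) (ν ^ 2)))
        = ν ^ (α + 1) := by
  have hω0 : 0 < ω := by rw [hω]; positivity
  have hM1 : 0 < kummerM (α / 2 + 1 / 2) (1 / 2) (ν ^ 2) :=
    kummerM_pos (by positivity) (by norm_num) (by positivity)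
  have hM2 : 0 < kummerM (α / 2 + 1) (3 / 2) (ν ^ 2) :=
    kummerM_pos (by positivity) (by norm_num) (by positivity)
  have hM3 : 0 < kummerM (α / 2 + 1 / 2) (1 / 2) (ν ^ 2 * ω ^ 2) :=
    kummerM_pos (by positivity) (by norm_num) (by positivity)
  have hsl : 0 < Real.sqrt dl := Real.sqrt_pos.2 hdl
  have hss : 0 < Real.sqrt ds := Real.sqrt_pos.2 hds
  have hωs : ω * Real.sqrt ds = Real.sqrt dl := by
    rw [hω, ← Real.sqrt_mul (by positivity)]; congr 1; field_simp
  have pds : ds ^ ((α - 1) / 2) = ds ^ (α / 2) / Real.sqrt ds := by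
    rw [Real.sqrt_eq_rpow, ← Real.rpow_sub hds]; congr 1; ring
  have pdl : dl ^ ((α + 1) / 2) = dl ^ (α / 2) * Real.sqrt dl := by
    rw [Real.sqrt_eq_rpow, ← Real.rpow_add hdl]; congr 1; ring
  have p2 : (2:ℝ) ^ (α + 1) = 2 ^ α * 2 := by
    rw [Real.rpow_add (by norm_num), Real.rpow_one]
  have pν : ν ^ (α + 1) = ν ^ α * ν := by
    rw [Real.rpow_add hνpos, Real.rpow_one]
  have hdlα : 0 < dl ^ (α / 2) := Real.rpow_pos_of_pos hdl _
  have h2α : 0 < (2:ℝ) ^ α := Real.rpow_pos_of_pos (by norm_num) _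
  have hFl' : Fl / kummerM (α / 2 + 1 / 2) (1 / 2) (ν ^ 2) = -(2 * h₀ * Tinf * Real.sqrt dl) / kl *
      (1 / (kummerM (α / 2 + 1 / 2) (1 / 2) (ν ^ 2)
                + 2 * Real.sqrt dl * h₀ / kl * ν * kummerM (α / 2 + 1) (3 / 2) (ν ^ 2))) := by
    have hB := kummerB hα ν
    rw [hFl, show 2 * Real.sqrt dl * h₀ * ν * kummerM (-α / 2 + 1 / 2) (3 / 2) (-ν ^ 2)
      = 2 * Real.sqrt dl * h₀ * (ν * kummerM (-α / 2 + 1 / 2) (3 / 2) (-ν ^ 2)) by ring, hB,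
      kummerA hα ν]
    have he := Real.exp_pos (-ν^2)
    generalize kummerM (α / 2 + 1 / 2) (1 / 2) (ν ^ 2) = m at *
    generalize kummerM (α / 2 + 1) (3 / 2) (ν ^ 2) = n at *
    generalize Real.exp (-ν^2) = e at *
    have e1 : kl * (e * m) + 2 * Real.sqrt dl * h₀ * (e * (ν * n))
      = e * (kl * m + 2 * Real.sqrt dl * h₀ * ν * n) := by ring
    have e2 : m + 2 * Real.sqrt dl * h₀ / kl * ν * n
      = (kl * m + 2 * Real.sqrt dl * h₀ * ν * n) / kl := by field_simp
    rw [e1, e2]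
    have : 0 < kl * m + 2 * Real.sqrt dl * h₀ * ν * n := by positivity
    generalize kl * m + 2 * Real.sqrt dl * h₀ * ν * n = q at *
    field_simp
  have hFs' : Fs / kummerM (α / 2 + 1 / 2) (1 / 2) (ν ^ 2 * ω ^ 2) =
      -Ti * (2:ℝ) ^ (α + 1) * ds ^ (α / 2) *
        (1 / tricomiU (α / 2 + 1 / 2) (1 / 2) (ν ^ 2 * ω ^ 2)) := by
    rw [hFs]
    generalize tricomiU (α / 2 + 1 / 2) (1 / 2) (ν ^ 2 * ω ^ 2) = u
    generalize kummerM (α / 2 + 1 / 2) (1 / 2) (ν ^ 2 * ω ^ 2) = m at *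
    rw [div_eq_mul_inv _ u, one_div, div_eq_iff hM3.ne']
    ring
  generalize hX : (1 / (kummerM (α / 2 + 1 / 2) (1 / 2) (ν ^ 2)
                + 2 * Real.sqrt dl * h₀ / kl * ν * kummerM (α / 2 + 1) (3 / 2) (ν ^ 2))) = X at *
  generalize hY : (1 / tricomiU (α / 2 + 1 / 2) (1 / 2) (ν ^ 2 * ω ^ 2)) = Y at *
  have key : ∀ t : ℝ, 0 < t →
      ks * deriv (fun y => Ψs y t) (s t) - kl * deriv (fun y => Ψl y t) (s t)
        = (t ^ (α / 2) / Real.sqrt t * γ * 2 ^ α * dl ^ ((α + 1) / 2)) *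
        (-(ks * Ti * ds ^ ((α - 1) / 2) / (γ * dl ^ ((α + 1) / 2))) * Y
        + h₀ * Tinf / (γ * (2:ℝ) ^ α * dl ^ ((α + 1) / 2)) * X) ∧
      γ * (s t) ^ α * deriv s t = (t ^ (α / 2) / Real.sqrt t * γ * 2 ^ α * dl ^ ((α + 1) / 2)) *
        ν ^ (α + 1) := by
    intro t ht
    have hst : 0 < Real.sqrt t := Real.sqrt_pos.2 ht
    have hτ : 0 < t ^ (α / 2) := Real.rpow_pos_of_pos ht _
    have ql : Real.sqrt (dl * t) = Real.sqrt dl * Real.sqrt t := Real.sqrt_mul hdl.le _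
    have qs : Real.sqrt (ds * t) = Real.sqrt ds * Real.sqrt t := Real.sqrt_mul hds.le _
    constructor
    · have fl : deriv (fun y => Ψl y t) (s t) = t ^ (α / 2) / (2 * Real.sqrt (dl * t)) *
          (Fl / kummerM (α / 2 + 1 / 2) (1 / 2) (ν ^ 2)) := by
        rw [← flux hα (t ^ (α / 2)) (2 * Real.sqrt (dl * t)) ν El Fl (by rw [ql]; positivity) hEl,
          hs, show 2 * ν * Real.sqrt (dl * t) = ν * (2 * Real.sqrt (dl * t)) by ring]
        simp only [hΨl]
      have fs : deriv (fun y => Ψs y t) (s t) = t ^ (α / 2) / (2 * Real.sqrt (ds * t)) *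
          (Fs / kummerM (α / 2 + 1 / 2) (1 / 2) (ν ^ 2 * ω ^ 2)) := by
        rw [← mul_pow, ← flux hα (t ^ (α / 2)) (2 * Real.sqrt (ds * t)) (ν * ω) Es Fs
          (by rw [qs]; positivity) (by rw [hEs, mul_pow, neg_mul]),
          hs, show 2 * ν * Real.sqrt (dl * t) = ν * ω * (2 * Real.sqrt (ds * t)) by
            rw [ql, qs, ← hωs]; ring]
        simp only [hΨs]
      rw [fl, fs, hFl', hFs', ql, qs, pds, pdl, p2]
      field_simp
      ring
    · have ds' : deriv s t = ν * Real.sqrt dl / Real.sqrt t := by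
        have hfs : s = fun t => 2 * ν * (Real.sqrt dl * Real.sqrt t) := by
          funext t; rw [hs, Real.sqrt_mul hdl.le]
        rw [hfs]
        have := ((Real.hasDerivAt_sqrt ht.ne').const_mul (Real.sqrt dl)).const_mul (2 * ν)
        rw [this.deriv]
        field_simp
      have sα : (s t) ^ α = 2 ^ α * ν ^ α * (dl ^ (α / 2) * t ^ (α / 2)) := by
        rw [hs, Real.mul_rpow (by positivity) (by positivity),
          Real.mul_rpow (by norm_num) hνpos.le, Real.sqrt_eq_rpow, ← Real.rpow_mul (by positivity),
          show 1 / 2 * α = α / 2 by ring, Real.mul_rpow hdl.le ht.le]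
      rw [ds', sα, pdl, pν]
      field_simp
  constructor
  · intro h
    have h1 := h 1 one_pos
    rw [(key 1 one_pos).1, (key 1 one_pos).2] at h1
    refine mul_left_cancel₀ ?_ h1
    rw [pdl]
    simp only [Real.one_rpow, Real.sqrt_one]
    positivity
  · intro h t ht
    rw [(key t ht).1, (key t ht).2, h]
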